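/- Let 0 ≤ m ≤ n, 0 ≤ k ≤ min{m, n−m}, and Y = {1,…,m} ∈ Ω_m. Then for every f ∈ S^{n−k,k} and every g ∈ S_n: (R_{m−k} f)(gY) = ((−1)^k / ((n−2k+2)_k · k!)) · ⟨f, g·Φ(n,m,k,k)⟩_{M^{n−k,k}}. (Here Φ(n,m,k,k) ∈ M^{n−k,k} is the function Φ(n,h,m',k) defined below with h = m and m' = k, built from the sets A = Y and B = {m+1,…,n}.) -/

import Mathlib

/-!
Write `A = gY` and let `S w` be the sum of `f` over the sets `Z` with `|Z \ A| = w`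
(`levelSum`).  Three facts give the identity.

* Summing `(d f)(D) = 0` over all `D` with `|D \ A| = w` and exchanging the order of summation
  gives `(w + 1) S (w + 1) + (k - w) S w = 0` (`levelSum_rec`), hence
  `S w = (-1)^w C(k, w) S 0` (`levelSum_eq`).  The left-hand side of the theorem is `S 0`.
* For `c = k` the sum defining the Hahn value `E_k(a, b, k, w)` has the single term `j = w`, so
  `E_k(a, b, k, w) = (-1)^(k - w) k! (b - k + 1)_w (a - k + 1)_{k - w}` (`hahnE_diag`).
* Therefore `⟨f, g · Φ⟩ = ∑_w E_k(n - m, m, k, w) S w` equals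
  `(-1)^k k! S 0 ∑_w C(k, w) (m - k + 1)_w (n - m - k + 1)_{k - w}`, and the last sum is
  `(n - 2k + 2)_k` by the Chu-Vandermonde identity (`poch_add`).
-/


open Finset

noncomputable section

/-- The Radon transform `d : M^{n-m,m} → M^{n-m+1,m-1}`, `(df)(B) = ∑_{x ∉ B} f(B ∪ {x})`. -/
def dR (n : ℕ) (f : Finset (Fin n) → ℂ) : Finset (Fin n) → ℂ :=
  fun B => ∑ x ∈ Bᶜ, f (insert x B)

/-- The adjoint Radon transform `d* : M^{n-m,m} → M^{n-m-1,m+1}`. -/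
def dS (n : ℕ) (f : Finset (Fin n) → ℂ) : Finset (Fin n) → ℂ :=
  fun B => ∑ x ∈ B, f (B.erase x)

/-- `R_q = (d*)^q / q!`, i.e. `(R_q f)(B) = ∑_{A ⊆ B, |A| = |B| - q} f(A)`. -/
def RT (n q : ℕ) (f : Finset (Fin n) → ℂ) : Finset (Fin n) → ℂ :=
  fun B => if q ≤ B.card then ∑ A ∈ B.powersetCard (B.card - q), f A else 0

/-- Pochhammer symbol `(t)_p = t(t+1)⋯(t+p-1)`. -/
def poch (t : ℤ) (p : ℕ) : ℤ := ∏ i ∈ Finset.range p, (t + i)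

/-- Dunkl-normalized Hahn polynomial value `E_m(a,b,c,x)`. -/
def hahnE (m : ℕ) (a b c x : ℤ) : ℤ :=
  ∑ j ∈ Finset.Icc (max 0 (x - c + m)) (min (m : ℤ) x),
    (-1) ^ j.toNat * (m.choose j.toNat : ℤ) * poch (b - m + 1) j.toNat * poch (-x) j.toNat *
      poch (a - m + 1) (m - j.toNat) * poch (x - c) (m - j.toNat)

/-- Inner product `⟨f, g⟩ = ∑ f(s) conj (g s)`. -/
def ip (n : ℕ) (f g : Finset (Fin n) → ℂ) : ℂ :=
  ∑ s : Finset (Fin n), f s * (starRingEnd ℂ) (g s)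

/-- Action of `S_n`: `(g · f)(ω) = f (g⁻¹ ω)`. -/
def permAct (n : ℕ) (g : Equiv.Perm (Fin n)) (f : Finset (Fin n) → ℂ) :
    Finset (Fin n) → ℂ :=
  fun s => f (s.image ⇑g⁻¹)

/-- The block `{o+1, …, o+a}` of the ground set `{1, …, n}` (0-indexed: positions `o ≤ x < o+a`). -/
def block (n o a : ℕ) : Finset (Fin n) :=
  Finset.filter (fun x => o ≤ (x : ℕ) ∧ (x : ℕ) < o + a) Finset.univ

/-- Tensor product relative to the partition `A = {1,…,h}`, `B = {h+1,…,n}`: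
`(φ ⊗ ψ)(Z) = φ(Z ∩ A) · ψ(Z ∩ B)`. -/
def tens (n h : ℕ) (φ ψ : Finset (Fin n) → ℂ) : Finset (Fin n) → ℂ :=
  fun Z => φ (Z ∩ block n 0 h) * ψ (Z ∩ block n h (n - h))

/-- `σ_{m-w}(A) ⊗ σ_w(B)`: characteristic function of
`{Y ∈ Ω_m : |Y ∩ A| = m-w, |Y ∩ B| = w}` with `A = {1,…,h}`, `B = {h+1,…,n}`. -/
def sigmaT (n h m w : ℕ) : Finset (Fin n) → ℂ :=
  fun Z => if (Z ∩ block n 0 h).card = m - w ∧ (Z ∩ block n h (n - h)).card = w then 1 else 0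

/-- `Φ(n,h,m,k) = ∑_w E_k(n-h,h,m,w) σ_{m-w}(A) ⊗ σ_w(B)`. -/
def PhiF (n h m k : ℕ) : Finset (Fin n) → ℂ :=
  fun Z => ∑ w ∈ Finset.Icc (m - h) (min (n - h) m),
    ((hahnE k ((n : ℤ) - h) (h : ℤ) (m : ℤ) (w : ℤ) : ℤ) : ℂ) * sigmaT n h m w Z

/-! ### Pochhammer symbols and the Hahn value -/

lemma poch_succ (t : ℤ) (p : ℕ) : poch t (p + 1) = poch t p * (t + p) := by
  simp [poch, Finset.prod_range_succ]

/-- Chu-Vandermonde identity for rising factorials. -/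
lemma poch_add (a b : ℤ) (p : ℕ) :
    poch (a + b) p =
      ∑ ij ∈ antidiagonal p, (p.choose ij.1 : ℤ) * (poch a ij.1 * poch b ij.2) := by
  induction p with
  | zero => simp [poch]
  | succ p ih =>
    rw [Finset.sum_antidiagonal_choose_succ_mul (fun i j => poch a i * poch b j),
      ← Finset.sum_add_distrib, poch_succ, ih, Finset.sum_mul]
    refine Finset.sum_congr rfl fun ij hij => ?_
    rw [HasAntidiagonal.mem_antidiagonal] at hij
    have h1 : p.choose ij.2 = p.choose ij.1 := by
      rw [← hij, Nat.choose_symm_add]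
    rw [h1, poch_succ, poch_succ, ← hij]
    push_cast
    ring

lemma poch_neg_self (p : ℕ) : poch (-(p : ℤ)) p = (-1) ^ p * p.factorial := by
  have h : ∀ q ≤ p, poch (-(p : ℤ)) q = (-1) ^ q * p.descFactorial q := by
    intro q
    induction q with
    | zero => simp [poch]
    | succ q ih =>
      intro hq
      rw [poch_succ, ih (by omega), Nat.descFactorial_succ, pow_succ]
      push_cast [Nat.cast_sub (show q ≤ p by omega)]
      ring
  rw [h p le_rfl, Nat.descFactorial_self]

lemma poch_pos {t : ℤ} (ht : 0 < t) (p : ℕ) : 0 < poch t p :=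
  Finset.prod_pos fun i _ => by positivity

/-- When `c` equals the degree, only the term `j = w` of the Hahn value survives. -/
lemma hahnE_diag (k w : ℕ) (hw : w ≤ k) (a b : ℤ) :
    hahnE k a b k w =
      (-1) ^ (k - w) * k.factorial * (poch (b - k + 1) w * poch (a - k + 1) (k - w)) := by
  have hI : Finset.Icc (max 0 ((w : ℤ) - k + k)) (min (k : ℤ) w) = {(w : ℤ)} := by
    ext j
    simp only [mem_Icc, mem_singleton]
    omega
  have h1 : (w : ℤ) - k = -((k - w : ℕ) : ℤ) := by omega
  rw [hahnE, hI, Finset.sum_singleton, Int.toNat_natCast, h1, poch_neg_self, poch_neg_self,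
    ← Nat.choose_mul_factorial_mul_factorial hw]
  have h2 : ((-1 : ℤ) ^ w) * (-1) ^ w = 1 := by
    rw [← mul_pow]; simp
  push_cast
  linear_combination ((-1) ^ (k - w) * (k.choose w : ℤ) * w.factorial * (k - w).factorial *
    (poch (b - k + 1) w * poch (a - k + 1) (k - w))) * h2

/-! ### Level sums of a function in the kernel of the Radon transform -/

/-- The sum of `f` over all sets having exactly `w` elements outside `A`. -/
def levelSum (n : ℕ) (f : Finset (Fin n) → ℂ) (A : Finset (Fin n)) (w : ℕ) : ℂ :=
  ∑ Z : Finset (Fin n), if (Z \ A).card = w then f Z else 0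

/-- Exchange of summation along the bijection `(D, x) ↦ (insert x D, x)` between pairs with
`x ∉ D` and pairs with `x ∈ Z`. -/
lemma sum_weight_mul_dR (n : ℕ) (f : Finset (Fin n) → ℂ) (φ : Finset (Fin n) → ℂ) :
    ∑ D : Finset (Fin n), φ D * dR n f D = ∑ Z : Finset (Fin n), f Z * ∑ x ∈ Z, φ (Z.erase x) := by
  simp only [dR, Finset.mul_sum]
  rw [Finset.sum_sigma', Finset.sum_sigma']
  refine Finset.sum_bij' (fun p _ => ⟨insert p.2 p.1, p.2⟩) (fun p _ => ⟨p.1.erase p.2, p.2⟩)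
    ?_ ?_ ?_ ?_ ?_
  · simp
  · simp
  · rintro ⟨D, x⟩ h
    have h : x ∉ D := by simpa using h
    simp [Finset.erase_insert h]
  · rintro ⟨Z, x⟩ h
    have h : x ∈ Z := by simpa using h
    simp [Finset.insert_erase h]
  · rintro ⟨D, x⟩ h
    have h : x ∉ D := by simpa using h
    simp only [Finset.erase_insert h]
    ring

/-- Erasing `x` from `Z` lowers `|Z \ A|` by one exactly when `x ∉ A`, which gives the number of
ways to reach level `w`. -/
lemma sum_erase_level (n : ℕ) (A Z : Finset (Fin n)) (w : ℕ) :
    (∑ x ∈ Z, if ((Z.erase x) \ A).card = w then (1 : ℂ) else 0) =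
      (if (Z \ A).card = w + 1 then (w + 1 : ℂ) else 0) +
        (if (Z \ A).card = w then ((Z.card : ℂ) - w) else 0) := by
  rw [← Finset.sum_sdiff (Finset.inter_subset_left : Z ∩ A ⊆ Z)]
  have e1 : ∀ x ∈ Z \ (Z ∩ A), (if ((Z.erase x) \ A).card = w then (1 : ℂ) else 0) =
      if (Z \ A).card = w + 1 then 1 else 0 := by
    intro x hx
    have hx' : x ∈ Z \ A := by simpa using hx
    have h1 : (Z.erase x) \ A = (Z \ A).erase x := Finset.erase_sdiff_comm _ _ _
    have h2 := Finset.card_erase_add_one hx'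
    rw [h1]
    congr 1
    exact propext (by omega)
  have e2 : ∀ x ∈ Z ∩ A, (if ((Z.erase x) \ A).card = w then (1 : ℂ) else 0) =
      if (Z \ A).card = w then 1 else 0 := by
    intro x hx
    have h1 : (Z.erase x) \ A = Z \ A := by
      ext y
      simp only [mem_inter, mem_sdiff, mem_erase] at *
      constructor
      · tauto
      · rintro ⟨hy, hyA⟩
        exact ⟨⟨fun h => hyA (h ▸ hx.2), hy⟩, hyA⟩
    rw [h1]
  rw [Finset.sum_congr rfl e1, Finset.sum_congr rfl e2, Finset.sum_const, Finset.sum_const,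
    Finset.sdiff_inter_self_left]
  have hc := Finset.card_sdiff_add_card_inter Z A
  have hc' : ((Z ∩ A).card : ℂ) = Z.card - (Z \ A).card := by
    rw [← hc]; push_cast; ring
  simp only [nsmul_eq_mul, mul_ite, mul_one, mul_zero, hc']
  congr 1
  · split_ifs with h
    · rw [h]; push_cast; rfl
    · rfl
  · split_ifs with h
    · rw [h]
    · rfl

lemma levelSum_rec (n k : ℕ) (f : Finset (Fin n) → ℂ)
    (hf : ∀ s : Finset (Fin n), s.card ≠ k → f s = 0) (hdf : dR n f = 0)
    (A : Finset (Fin n)) (w : ℕ) :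
    ((w : ℂ) + 1) * levelSum n f A (w + 1) + ((k : ℂ) - w) * levelSum n f A w = 0 := by
  have h := sum_weight_mul_dR n f (fun D => if (D \ A).card = w then 1 else 0)
  rw [hdf] at h
  simp only [Pi.zero_apply, mul_zero, Finset.sum_const_zero, sum_erase_level] at h
  rw [h, levelSum, levelSum, Finset.mul_sum, Finset.mul_sum, ← Finset.sum_add_distrib]
  refine Finset.sum_congr rfl fun Z _ => ?_
  by_cases hZ : Z.card = k
  · rw [hZ]
    split_ifs <;> ring
  · simp [hf Z hZ]

lemma levelSum_eq (n k : ℕ) (f : Finset (Fin n) → ℂ)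
    (hf : ∀ s : Finset (Fin n), s.card ≠ k → f s = 0) (hdf : dR n f = 0)
    (A : Finset (Fin n)) (w : ℕ) (hw : w ≤ k) :
    levelSum n f A w = (-1) ^ w * (k.choose w : ℂ) * levelSum n f A 0 := by
  induction w with
  | zero => simp
  | succ w ih =>
    have h := levelSum_rec n k f hf hdf A w
    rw [ih (by omega)] at h
    have hc : ((k.choose (w + 1) : ℕ) : ℂ) * (w + 1) = k.choose w * (k - w) := by
      have := Nat.choose_succ_right_eq k w
      rw [← Nat.cast_sub (by omega : w ≤ k)]
      exact_mod_cast this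
    have hne : (w : ℂ) + 1 ≠ 0 := by exact_mod_cast Nat.succ_ne_zero w
    apply mul_left_cancel₀ hne
    rw [pow_succ]
    linear_combination h + (-1) ^ w * levelSum n f A 0 * hc

/-! ### The two sides of the identity as level sums -/

lemma block_compl (n m : ℕ) (hm : m ≤ n) : block n m (n - m) = (block n 0 m)ᶜ := by
  ext x
  have := x.2
  simp only [block, mem_filter, mem_univ, true_and, mem_compl]
  omega

lemma card_block (n m : ℕ) (hm : m ≤ n) : (block n 0 m).card = m := by
  have h : block n 0 m = Finset.univ.filter (fun x : Fin n => (x : ℕ) < m) := by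
    ext x; simp [block]
  rw [h, Fin.card_filter_val_lt, min_eq_right hm]

/-- On sets of size `k`, the function `Φ(n, m, k, k)` is a Hahn value of `|Z \ Y|`. -/
lemma PhiF_apply (n m k : ℕ) (hm : m ≤ n) (hk2 : k ≤ n - m)
    (Z : Finset (Fin n)) (hZ : Z.card = k) :
    PhiF n m k k Z = (hahnE k ((n : ℤ) - m) m k ((Z \ block n 0 m).card : ℤ) : ℂ) := by
  have hB : Z ∩ block n m (n - m) = Z \ block n 0 m := by
    rw [block_compl n m hm, Finset.sdiff_eq_inter_compl]
  have hc := Finset.card_sdiff_add_card_inter Z (block n 0 m)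
  rw [PhiF, Finset.sum_eq_single (Z \ block n 0 m).card]
  · rw [sigmaT, if_pos, mul_one]
    rw [hB]
    omega
  · intro w _ hw
    rw [sigmaT, if_neg, mul_zero]
    rw [hB]
    exact fun h => hw h.2.symm
  · intro h
    exfalso
    apply h
    rw [mem_Icc, le_min_iff]
    have := Finset.card_le_card (Finset.sdiff_subset : Z \ block n 0 m ⊆ Z)
    have h1 : (Z ∩ block n 0 m).card ≤ m :=
      (Finset.card_le_card Finset.inter_subset_right).trans_eq (card_block n m hm)
    omega

lemma RT_eq_levelSum (n m k : ℕ) (hk1 : k ≤ m) (f : Finset (Fin n) → ℂ)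
    (hf : ∀ s : Finset (Fin n), s.card ≠ k → f s = 0) (A : Finset (Fin n)) (hA : A.card = m) :
    RT n (m - k) f A = levelSum n f A 0 := by
  rw [RT, if_pos (by omega), hA, Nat.sub_sub_self hk1, levelSum, ← Finset.sum_filter]
  refine Finset.sum_subset ?_ ?_
  · intro Z hZ
    rw [mem_powersetCard] at hZ
    simpa using hZ.1
  · intro Z hZ hZ'
    apply hf
    intro hc
    apply hZ'
    rw [mem_powersetCard]
    exact ⟨by simpa using hZ, hc⟩

lemma card_image_inv_sdiff (n : ℕ) (g : Equiv.Perm (Fin n)) (Z Y : Finset (Fin n)) :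
    ((Z.image ⇑g⁻¹) \ Y).card = (Z \ Y.image ⇑g).card := by
  rw [← Finset.card_image_of_injective (Z \ Y.image ⇑g) (g⁻¹).injective,
    Finset.image_sdiff _ _ (g⁻¹).injective, Finset.image_image]
  simp

lemma ip_eq_sum_levelSum (n m k : ℕ) (hm : m ≤ n) (hk2 : k ≤ n - m)
    (f : Finset (Fin n) → ℂ) (hf : ∀ s : Finset (Fin n), s.card ≠ k → f s = 0)
    (g : Equiv.Perm (Fin n)) :
    ip n f (permAct n g (PhiF n m k k)) =
      ∑ w ∈ range (k + 1), (hahnE k ((n : ℤ) - m) m k w : ℂ) *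
        levelSum n f ((block n 0 m).image ⇑g) w := by
  simp only [levelSum, Finset.mul_sum, ip]
  rw [Finset.sum_comm]
  refine Finset.sum_congr rfl fun Z _ => ?_
  by_cases hZ : Z.card = k
  · have hle := Finset.card_le_card
      (Finset.sdiff_subset : Z \ (block n 0 m).image ⇑g ⊆ Z)
    rw [permAct, PhiF_apply n m k hm hk2 _
      (by rw [Finset.card_image_of_injective _ (g⁻¹).injective, hZ]), card_image_inv_sdiff]
    simp only [mul_ite, mul_zero]
    rw [Finset.sum_ite_eq, if_pos (by rw [mem_range]; omega), map_intCast, mul_comm]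
  · simp [hf Z hZ]


/-- Lemma 3.12 / Corollary 3.13 (matrix-coefficient expression): for `f ∈ S^{n-k,k}`,
`(R_{m-k} f)(gY) = ((-1)^k / ((n-2k+2)_k k!)) ⟨f, g · Φ(n,m,k,k)⟩`. -/
theorem stmt14 (n m k : ℕ) (hn : 1 ≤ n) (hm : m ≤ n) (hk1 : k ≤ m) (hk2 : k ≤ n - m)
    (f : Finset (Fin n) → ℂ) (hf : ∀ s : Finset (Fin n), s.card ≠ k → f s = 0)
    (hdf : dR n f = 0) (g : Equiv.Perm (Fin n)) :
    RT n (m - k) f (Finset.image ⇑g (block n 0 m)) =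
      ((-1 : ℂ) ^ k / (((poch ((n : ℤ) - 2 * k + 2) k : ℤ) : ℂ) * (k.factorial : ℂ))) *
        ip n f (permAct n g (PhiF n m k k)) := by
  have hA : ((block n 0 m).image ⇑g).card = m := by
    rw [Finset.card_image_of_injective _ g.injective, card_block n m hm]
  rw [RT_eq_levelSum n m k hk1 f hf _ hA, ip_eq_sum_levelSum n m k hm hk2 f hf g]
  set S := levelSum n f ((block n 0 m).image ⇑g) with hS
  set P : ℤ := poch ((n : ℤ) - 2 * k + 2) k with hP
  have hP0 : (P : ℂ) ≠ 0 := by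
    have : 0 < P := poch_pos (by omega) k
    exact_mod_cast this.ne'
  have hk0 : (k.factorial : ℂ) ≠ 0 := by exact_mod_cast k.factorial_ne_zero
  have hV : (P : ℂ) = ∑ w ∈ range (k + 1), (k.choose w : ℂ) *
      ((poch ((m : ℤ) - k + 1) w : ℂ) * (poch ((n : ℤ) - m - k + 1) (k - w) : ℂ)) := by
    have h := poch_add ((m : ℤ) - k + 1) ((n : ℤ) - m - k + 1) k
    rw [Finset.Nat.sum_antidiagonal_eq_sum_range_succ_mk] at h
    have e : (m : ℤ) - k + 1 + ((n : ℤ) - m - k + 1) = (n : ℤ) - 2 * k + 2 := by ring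
    rw [e] at h
    rw [hP, h]
    push_cast
    rfl
  have hsum : ∑ w ∈ range (k + 1), (hahnE k ((n : ℤ) - m) m k w : ℂ) * S w =
      (-1) ^ k * k.factorial * P * S 0 := by
    rw [hV, Finset.mul_sum, Finset.sum_mul]
    refine Finset.sum_congr rfl fun w hw => ?_
    have hw : w ≤ k := by rw [mem_range] at hw; omega
    rw [hahnE_diag k w hw, hS, levelSum_eq n k f hf hdf _ w hw]
    have hs : (-1 : ℂ) ^ k = (-1) ^ (k - w) * (-1) ^ w := by
      rw [← pow_add, Nat.sub_add_cancel hw]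
    rw [hs]
    push_cast
    ring
  have h1 : ((-1 : ℂ) ^ k) * (-1) ^ k = 1 := by
    rw [← mul_pow]; simp
  rw [hsum]
  field_simp
  linear_combination -(S 0) * h1
end
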